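/- For every nonempty 𝒮, every probability distribution P on 𝒳, and every ε∈(0,1), limsup_{n→∞} −(1/n)·log₂ β_n(ε) ≤ inf_Q I[X;B]_{P,Q}, where the infimum is over all finitely supported probability distributions Q on 𝒮. -/

import Mathlib

open Filter
open scoped ComplexOrder

noncomputable section

/-- A density matrix: positive semidefinite with unit trace. -/
def IsDensity {m : Type*} [Fintype m] (ρ : Matrix m m ℂ) : Prop :=
  ρ.PosSemidef ∧ ρ.trace = 1

/-- Loewner order `A ⪯ B`. -/
def Loewner {m : Type*} [Fintype m] (A B : Matrix m m ℂ) : Prop :=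
  (B - A).PosSemidef

/-- Functional calculus for Hermitian matrices (junk value `0` on non-Hermitian input). -/
def matFun {m : Type*} [Fintype m] [DecidableEq m] (f : ℝ → ℝ) (A : Matrix m m ℂ) :
    Matrix m m ℂ :=
  if hA : A.IsHermitian then
    (hA.eigenvectorUnitary : Matrix m m ℂ) *
        Matrix.diagonal (fun i => (f (hA.eigenvalues i) : ℂ)) *
      star (hA.eigenvectorUnitary : Matrix m m ℂ)
  else 0

/-- Base-2 matrix logarithm, taken on the support. -/
def mlog2 {m : Type*} [Fintype m] [DecidableEq m] (A : Matrix m m ℂ) : Matrix m m ℂ :=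
  matFun (fun u => if u ≤ 0 then 0 else Real.logb 2 u) A

/-- Quantum relative entropy `D(ρ‖σ) = Tr[ρ(log₂ρ − log₂σ)]` (logarithms on supports). -/
def relEnt {m : Type*} [Fintype m] [DecidableEq m] (ρ σ : Matrix m m ℂ) : ℝ :=
  (Matrix.trace (ρ * (mlog2 ρ - mlog2 σ))).re

/-- The classical–quantum state `Σ_x w(x) |x⟩⟨x| ⊗ ρ_x`. -/
def cqState {X B : Type*} [DecidableEq X] (w : X → ℝ) (ρ : X → Matrix B B ℂ) :
    Matrix (X × B) (X × B) ℂ :=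
  Matrix.of fun p q => (if p.1 = q.1 then ((w p.1 : ℝ) : ℂ) else 0) * ρ p.1 p.2 q.2

/-- Tensor product of a finite family of matrices, realized on functions. -/
def tensorFam {k d : Type*} [Fintype k] (ρ : k → Matrix d d ℂ) :
    Matrix (k → d) (k → d) ℂ :=
  Matrix.of fun i j => ∏ a, ρ a (i a) (j a)

/-- Finitely supported probability distributions on `𝒮`. -/
abbrev FinProb (𝒮 : Type*) : Type _ :=
  {Q : 𝒮 →₀ ℝ // (∀ s, 0 ≤ Q s) ∧ Q.sum (fun _ a => a) = 1}

/-- Assumption A. -/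
def AssumptionA {𝒳 𝒮 : Type*} {d : ℕ} (ρ : 𝒳 → 𝒮 → Matrix (Fin d) (Fin d) ℂ) : Prop :=
  ∀ ε : ℝ, 0 < ε → ∃ Sε : Finset 𝒮, ∀ s : 𝒮, ∃ s' ∈ Sε, ∀ x : 𝒳,
    Loewner (ρ x s) ((1 + ε) • ρ x s')

/-- The mutual information `I[X;B]_{P,Q}`. -/
def mutInfI {𝒳 𝒮 : Type*} [Fintype 𝒳] [DecidableEq 𝒳] {d : ℕ}
    (ρ : 𝒳 → 𝒮 → Matrix (Fin d) (Fin d) ℂ) (P : 𝒳 → ℝ) (Q : 𝒮 →₀ ℝ) : ℝ :=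
  relEnt (cqState P (fun x => Q.sum fun s w => w • ρ x s))
    (cqState P (fun _ => ∑ x, P x • (Q.sum fun s w => w • ρ x s)))

/-- The optimal type-II error `β_n(ε)` of the universal independence test. -/
def betaN {𝒳 𝒮 : Type*} [Fintype 𝒳] [DecidableEq 𝒳] {d : ℕ}
    (ρ : 𝒳 → 𝒮 → Matrix (Fin d) (Fin d) ℂ) (P : 𝒳 → ℝ) (ε : ℝ) (n : ℕ) : ℝ :=
  sInf { v : ℝ |
    ∃ T : Matrix ((Fin n → 𝒳) × (Fin n → Fin d)) ((Fin n → 𝒳) × (Fin n → Fin d)) ℂ,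
      T.PosSemidef ∧ (1 - T).PosSemidef ∧
      (∀ sv : Fin n → 𝒮,
        (Matrix.trace ((1 - T) *
          cqState (fun xv : Fin n → 𝒳 => ∏ k, P (xv k))
            (fun xv => tensorFam fun k => ρ (xv k) (sv k)))).re ≤ ε) ∧
      v = ⨆ σ : {σ : Matrix (Fin n → Fin d) (Fin n → Fin d) ℂ // IsDensity σ},
        (Matrix.trace (T * cqState (fun xv : Fin n → 𝒳 => ∏ k, P (xv k)) (fun _ => σ.1))).re }

/-!
Fix a distribution `Q` on `𝒮`. A test whose type-I error is at most `ε` for every state sequence has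
error at most `ε` for the `Q`-average, which is the `n`-fold power of a single classical–quantum
state `ρ`; and the product of its marginals `σ` is one of the alternatives. So the claim reduces to
the strong converse of quantum Stein's lemma for the pair `(ρ, σ)`, with `D(ρ‖σ) = I[X;B]_{P,Q}`.

For the latter, let `E` be the spectral projection of `σ^{⊗n}` on eigenvalues at least `r`, and
truncate `ρ^{⊗n}` to its eigenvalues at most `t`, giving `A ≤ t`. Positivity of
`(2E - 1) A (2E - 1)` gives `A ≤ 2 (E A E + (1 - E) A (1 - E))`, so a test `T` satisfies
`Tr[T A] ≤ 2 (t Tr[T E] + Tr[(1 - E) A])`, while `r Tr[T E] ≤ Tr[T σ^{⊗n}]`. By Chernoff's bound the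
truncation error and `Tr[(1 - E) ρ^{⊗n}]` vanish as `n → ∞` when `t = 2^{n a}` with
`a > Tr[ρ log ρ]` and `r = 2^{n b}` with `b < Tr[ρ log σ]`; and `a - b` can be taken arbitrarily
close to `D(ρ‖σ)`.
-/

section TraceInequalities

lemma le_two_smul_pinching {R : Type*} [Ring R] [PartialOrder R] [StarRing R] [StarOrderedRing R]
    {A E : R} (hA : 0 ≤ A) (hE : IsSelfAdjoint E) :
    A ≤ 2 • (E * A * E + (1 - E) * A * (1 - E)) := by
  have hreflect : 0 ≤ (E - (1 - E)) * A * (E - (1 - E)) :=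
    (hE.sub ((IsSelfAdjoint.one R).sub hE)).conjugate_nonneg hA
  have hexpand : (E - (1 - E)) * A * (E - (1 - E)) =
      2 • (E * A * E + (1 - E) * A * (1 - E)) - A := by
    noncomm_ring
  rwa [hexpand, sub_nonneg] at hreflect

open Matrix
open scoped MatrixOrder

variable {m : Type*} [Fintype m] {T A B : Matrix m m ℂ}

lemma re_trace_mul_nonneg (hA : 0 ≤ A) (hB : 0 ≤ B) : 0 ≤ (trace (A * B)).re := by
  classical
  obtain ⟨C, rfl⟩ := CStarAlgebra.nonneg_iff_eq_star_mul_self.mp hA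
  rw [trace_mul_cycle, trace_mul_cycle]
  exact (Complex.le_def.mp
    (nonneg_iff_posSemidef.mp (star_right_conjugate_nonneg hB C)).trace_nonneg).1

lemma re_trace_mul_le_re_trace_mul (hT : 0 ≤ T) (hAB : A ≤ B) :
    (trace (T * A)).re ≤ (trace (T * B)).re := by
  simpa [mul_sub] using re_trace_mul_nonneg hT (sub_nonneg.mpr hAB)

variable [DecidableEq m]

lemma re_trace_mul_le_re_trace (hT : T ≤ 1) (hA : 0 ≤ A) : (trace (T * A)).re ≤ (trace A).re := by
  simpa [sub_mul] using re_trace_mul_nonneg (sub_nonneg.mpr hT) hA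

lemma re_trace_mul_le_of_isStarProjection {E : Matrix m m ℂ} {t : ℝ} (hT₀ : 0 ≤ T) (hT₁ : T ≤ 1)
    (hA : 0 ≤ A) (hAt : A ≤ t • 1) (hE : IsStarProjection E) :
    (trace (T * A)).re ≤ 2 * (t * (trace (T * E)).re + (trace ((1 - E) * A)).re) := by
  have hEc := hE.one_sub
  have hblock : E * A * E ≤ t • E := by
    simpa [hE.isSelfAdjoint.star_eq, hE.isIdempotentElem.eq] using
      star_left_conjugate_le_conjugate hAt E
  have hcompl : trace ((1 - E) * A * (1 - E)) = trace ((1 - E) * A) := by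
    rw [trace_mul_comm, ← mul_assoc, hEc.isIdempotentElem.eq]
  have hsplit : (trace (T * A)).re ≤
      2 * ((trace (T * (E * A * E))).re + (trace (T * ((1 - E) * A * (1 - E)))).re) := by
    have hpinch := re_trace_mul_le_re_trace_mul hT₀ (le_two_smul_pinching hA hE.isSelfAdjoint)
    rw [mul_smul_comm, mul_add, trace_smul, trace_add] at hpinch
    simpa [mul_add] using hpinch
  refine hsplit.trans (mul_le_mul_of_nonneg_left (add_le_add ?_ ?_) zero_le_two)
  · simpa using re_trace_mul_le_re_trace_mul hT₀ hblock
  · simpa only [hcompl] using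
      re_trace_mul_le_re_trace hT₁ (hEc.isSelfAdjoint.conjugate_nonneg hA)

end TraceInequalities

section Spectral

open Matrix

variable {m : Type*} [Fintype m] [DecidableEq m]

/-- The Hermitian matrix `U diag(f) U*`, with eigenbasis the columns of `U` and eigenvalues `f`,
bundled as a star-algebra homomorphism in `f`: it is the functional calculus of that eigenbasis. -/
def conjDiagonal (U : unitaryGroup m ℂ) : (m → ℝ) →⋆ₐ[ℝ] Matrix m m ℂ :=
  (Unitary.conjStarAlgAut ℝ (Matrix m m ℂ) U : Matrix m m ℂ →⋆ₐ[ℝ] Matrix m m ℂ).comp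
    { (diagonalAlgHom ℝ).comp (Complex.ofRealAm.compLeft m) with
      map_star' := fun f => by
        simp [star_eq_conjTranspose, diagonal_conjTranspose, Pi.star_def] }

lemma conjDiagonal_apply (U : unitaryGroup m ℂ) (f : m → ℝ) :
    conjDiagonal U f = U * diagonal (fun i => (f i : ℂ)) * star (U : Matrix m m ℂ) :=
  rfl

/-- The probability of outcome `i` when `ρ` is measured in the orthonormal basis formed by the
columns of `U`. -/
def measurementProb (U : unitaryGroup m ℂ) (ρ : Matrix m m ℂ) (i : m) : ℝ :=
  ((star (U : Matrix m m ℂ) * ρ * U) i i).re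

lemma ofReal_measurementProb (U : unitaryGroup m ℂ) {ρ : Matrix m m ℂ} (hρ : ρ.IsHermitian)
    (i : m) : (measurementProb U ρ i : ℂ) = (star (U : Matrix m m ℂ) * ρ * U) i i :=
  Complex.conj_eq_iff_re.mp ((isHermitian_conjTranspose_mul_mul (U : Matrix m m ℂ) hρ).apply i i)

lemma measurementProb_nonneg (U : unitaryGroup m ℂ) {ρ : Matrix m m ℂ} (hρ : ρ.PosSemidef)
    (i : m) : 0 ≤ measurementProb U ρ i :=
  (Complex.le_def.mp (hρ.conjTranspose_mul_mul_same (U : Matrix m m ℂ)).diag_nonneg).1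

lemma sum_measurementProb (U : unitaryGroup m ℂ) (ρ : Matrix m m ℂ) :
    ∑ i, measurementProb U ρ i = (trace ρ).re := by
  have htrace : trace (star (U : Matrix m m ℂ) * ρ * (U : Matrix m m ℂ)) = trace ρ := by
    rw [trace_mul_comm, ← mul_assoc, Unitary.mul_star_self_of_mem U.2, one_mul]
  rw [← htrace, trace, Complex.re_sum]
  rfl

lemma re_trace_conjDiagonal_mul (U : unitaryGroup m ℂ) (f : m → ℝ) (ρ : Matrix m m ℂ) :
    (trace (conjDiagonal U f * ρ)).re = ∑ i, f i * measurementProb U ρ i := by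
  rw [conjDiagonal_apply, mul_assoc, mul_assoc, trace_mul_comm, mul_assoc, trace, Complex.re_sum]
  simp [measurementProb, diagonal_mul]

lemma measurementProb_conjDiagonal (U : unitaryGroup m ℂ) (f : m → ℝ) :
    measurementProb U (conjDiagonal U f) = f := by
  ext i
  simp [measurementProb, conjDiagonal_apply, mul_assoc, ← mul_assoc (star (U : Matrix m m ℂ))]

lemma re_trace_conjDiagonal (U : unitaryGroup m ℂ) (f : m → ℝ) :
    (trace (conjDiagonal U f)).re = ∑ i, f i := by
  rw [← sum_measurementProb U, measurementProb_conjDiagonal]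

lemma measurementProb_eq_zero_of_ker_le {U : unitaryGroup m ℂ} {f : m → ℝ} {ρ : Matrix m m ℂ}
    (hker : ∀ v, conjDiagonal U f *ᵥ v = 0 → ρ *ᵥ v = 0) {i : m} (hi : f i = 0) :
    measurementProb U ρ i = 0 := by
  have hcol : ρ *ᵥ ((U : Matrix m m ℂ) *ᵥ Pi.single i 1) = 0 := by
    refine hker _ ?_
    have hdiag : diagonal (fun j => (f j : ℂ)) *ᵥ Pi.single i 1 = 0 := by
      ext j
      by_cases hji : j = i <;> simp [hji, hi]
    rw [conjDiagonal_apply, mulVec_mulVec, mul_assoc, Unitary.star_mul_self_of_mem U.2, mul_one,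
      ← mulVec_mulVec, hdiag, mulVec_zero]
  have hentry : (star (U : Matrix m m ℂ) * ρ * U) i i =
      (star (U : Matrix m m ℂ) *ᵥ (ρ *ᵥ ((U : Matrix m m ℂ) *ᵥ Pi.single i 1))) i := by
    rw [mulVec_mulVec, mulVec_mulVec, mulVec_single_one, mul_assoc, col_apply]
  rw [measurementProb, hentry, hcol, mulVec_zero, Pi.zero_apply, Complex.zero_re]

end Spectral

section OneShot

open Matrix
open scoped MatrixOrder

variable {m : Type*} [Fintype m] [DecidableEq m] {U V : unitaryGroup m ℂ} {a b : m → ℝ}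
  {T : Matrix m m ℂ}

lemma re_trace_mul_conjDiagonal_le_truncation (hT : T ≤ 1) (ha : 0 ≤ a) (t : ℝ) :
    (trace (T * conjDiagonal U a)).re ≤
      (trace (T * conjDiagonal U ({i | a i ≤ t}.indicator a))).re + ∑ i with t < a i, a i := by
  have htail : a - {i | a i ≤ t}.indicator a = {i | t < a i}.indicator a := by
    rw [← Set.indicator_compl]
    simp [Set.compl_ofPred]
  have hbound := re_trace_mul_le_re_trace hT
    (map_nonneg (conjDiagonal U) (Set.indicator_nonneg (s := {i | t < a i}) fun i _ => ha i))
  rw [re_trace_conjDiagonal, ← htail, map_sub, mul_sub, trace_sub, Complex.sub_re, htail,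
    Finset.sum_indicator_eq_sum_filter, sub_le_iff_le_add'] at hbound
  simpa using hbound

lemma re_trace_one_sub_conjDiagonal_indicator_mul (V : unitaryGroup m ℂ) (b : m → ℝ) (r : ℝ)
    (ρ : Matrix m m ℂ) :
    (trace ((1 - conjDiagonal V ({i | r ≤ b i}.indicator 1)) * ρ)).re =
      ∑ i with b i < r, measurementProb V ρ i := by
  rw [← map_one (conjDiagonal V), ← map_sub, ← Set.indicator_compl, re_trace_conjDiagonal_mul,
    Finset.sum_filter]
  simp [Set.indicator_apply]

theorem mul_re_trace_mul_conjDiagonal_le (hT₀ : 0 ≤ T) (hT₁ : T ≤ 1) (ha : 0 ≤ a) (hb : 0 ≤ b)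
    {t r : ℝ} (ht : 0 ≤ t) (hr : 0 ≤ r) :
    r * (trace (T * conjDiagonal U a)).re ≤
      2 * t * (trace (T * conjDiagonal V b)).re +
        r * (∑ i with t < a i, a i +
          2 * ∑ i with b i < r, measurementProb V (conjDiagonal U a) i) := by
  set A := conjDiagonal U ({i | a i ≤ t}.indicator a)
  set E := conjDiagonal V ({i | r ≤ b i}.indicator 1)
  have hE : IsStarProjection E :=
    IsStarProjection.map ⟨by ext; simp [Set.indicator], by ext; simp⟩ (conjDiagonal V)
  have hA₀ : 0 ≤ A := map_nonneg _ (Set.indicator_nonneg fun i _ => ha i)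
  have hAt : A ≤ t • 1 := by
    rw [← map_one (conjDiagonal U), ← map_smul]
    refine OrderHomClass.mono _ fun i => Set.indicator_le' ?_ ?_ i <;> simp [ht]
  have hAR : A ≤ conjDiagonal U a :=
    OrderHomClass.mono _ (Set.indicator_le_self' fun i _ => ha i)
  have hES : r • E ≤ conjDiagonal V b := by
    rw [← map_smul]
    refine OrderHomClass.mono _ fun i => ?_
    by_cases hi : r ≤ b i
    · simp [hi]
    · simpa [hi] using hb i
  have htrunc := re_trace_mul_conjDiagonal_le_truncation (U := U) hT₁ ha t
  have hpinch := re_trace_mul_le_of_isStarProjection hT₀ hT₁ hA₀ hAt hE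
  have htail : (trace ((1 - E) * A)).re ≤
      ∑ i with b i < r, measurementProb V (conjDiagonal U a) i :=
    (re_trace_mul_le_re_trace_mul hE.one_sub.nonneg hAR).trans_eq
      (re_trace_one_sub_conjDiagonal_indicator_mul V b r _)
  have htypeII : r * (trace (T * E)).re ≤ (trace (T * conjDiagonal V b)).re := by
    simpa using re_trace_mul_le_re_trace_mul hT₀ hES
  set tailA := ∑ i with t < a i, a i
  set tailB := ∑ i with b i < r, measurementProb V (conjDiagonal U a) i
  calc r * (trace (T * conjDiagonal U a)).re
      ≤ r * (2 * (t * (trace (T * E)).re + tailB) + tailA) := by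
        gcongr
        linarith
    _ = 2 * t * (r * (trace (T * E)).re) + r * (tailA + 2 * tailB) := by ring
    _ ≤ 2 * t * (trace (T * conjDiagonal V b)).re + r * (tailA + 2 * tailB) := by gcongr

end OneShot

section Tensor

open Matrix
open scoped MatrixOrder

variable {k d : Type*} [Fintype k]

lemma tensorFam_conjTranspose (A : k → Matrix d d ℂ) :
    tensorFam (fun a => (A a)ᴴ) = (tensorFam A)ᴴ := by
  ext i j
  simp [tensorFam, conjTranspose_apply]

lemma tensorFam_diagonal [DecidableEq d] (f : k → d → ℂ) :
    tensorFam (fun a => diagonal (f a)) = diagonal fun i => ∏ a, f a (i a) := by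
  ext i j
  simp only [tensorFam, of_apply, diagonal_apply, Fintype.prod_ite_zero, funext_iff]

lemma tensorFam_one [DecidableEq d] : tensorFam (fun _ : k => (1 : Matrix d d ℂ)) = 1 := by
  simpa using tensorFam_diagonal fun (_ : k) (_ : d) => (1 : ℂ)

variable [DecidableEq k]

lemma tensorFam_sum_smul {S : Type*} (s : Finset S) (w : S → ℝ) (A : k → S → Matrix d d ℂ) :
    tensorFam (fun a => ∑ i ∈ s, w i • A a i) =
      ∑ v ∈ Fintype.piFinset fun _ : k => s, (∏ a, w (v a)) • tensorFam fun a => A a (v a) := by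
  ext i j
  simp [tensorFam, Matrix.sum_apply, Finset.prod_univ_sum, Finset.prod_mul_distrib]

variable [Fintype d]

lemma tensorFam_mul (A B : k → Matrix d d ℂ) :
    tensorFam (fun a => A a * B a) = tensorFam A * tensorFam B := by
  ext i j
  simp [tensorFam, mul_apply, Fintype.prod_sum, Finset.prod_mul_distrib]

lemma trace_tensorFam (A : k → Matrix d d ℂ) : trace (tensorFam A) = ∏ a, trace (A a) := by
  simp [trace, tensorFam, Fintype.prod_sum]

lemma IsDensity.tensorFam {ρ : k → Matrix d d ℂ} (hρ : ∀ a, IsDensity (ρ a)) :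
    IsDensity (tensorFam ρ) := by
  classical
  choose C hC using fun a => CStarAlgebra.nonneg_iff_eq_star_mul_self.mp (hρ a).1.nonneg
  have hsquare : _root_.tensorFam ρ = (_root_.tensorFam C)ᴴ * _root_.tensorFam C := by
    rw [funext hC, tensorFam_mul, ← tensorFam_conjTranspose]
    rfl
  refine ⟨hsquare ▸ posSemidef_conjTranspose_mul_self _, ?_⟩
  simp [trace_tensorFam, (hρ _).2]

variable [DecidableEq d]

/-- The tensor product of a family of unitaries. -/
def tensorUnitary (U : k → unitaryGroup d ℂ) : unitaryGroup (k → d) ℂ :=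
  ⟨tensorFam fun a => (U a : Matrix d d ℂ), by
    rw [mem_unitaryGroup_iff, star_eq_conjTranspose, ← tensorFam_conjTranspose, ← tensorFam_mul,
      ← tensorFam_one]
    exact congrArg _ (funext fun a => Unitary.mul_star_self_of_mem (U a).2)⟩

lemma coe_tensorUnitary (U : k → unitaryGroup d ℂ) :
    (tensorUnitary U : Matrix (k → d) (k → d) ℂ) = tensorFam fun a => (U a : Matrix d d ℂ) :=
  rfl

lemma tensorFam_conjDiagonal (U : k → unitaryGroup d ℂ) (f : k → d → ℝ) :
    tensorFam (fun a => conjDiagonal (U a) (f a)) =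
      conjDiagonal (tensorUnitary U) fun j => ∏ a, f a (j a) := by
  simp only [conjDiagonal_apply, coe_tensorUnitary, star_eq_conjTranspose, tensorFam_mul,
    tensorFam_conjTranspose, tensorFam_diagonal, Complex.ofReal_prod]

lemma measurementProb_tensorFam (U : k → unitaryGroup d ℂ) {ρ : k → Matrix d d ℂ}
    (hρ : ∀ a, (ρ a).IsHermitian) (j : k → d) :
    measurementProb (tensorUnitary U) (tensorFam ρ) j =
      ∏ a, measurementProb (U a) (ρ a) (j a) := by
  have hentry : (star (tensorUnitary U : Matrix (k → d) (k → d) ℂ) * tensorFam ρ *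
      (tensorUnitary U : Matrix (k → d) (k → d) ℂ)) j j =
      ((∏ a, measurementProb (U a) (ρ a) (j a) : ℝ) : ℂ) := by
    simp only [coe_tensorUnitary, star_eq_conjTranspose, ← tensorFam_conjTranspose,
      ← tensorFam_mul, Complex.ofReal_prod, ofReal_measurementProb _ (hρ _)]
    rfl
  rw [measurementProb, hentry, Complex.ofReal_re]

end Tensor

section LargeDeviations

open scoped Topology

variable {m : Type*} [Fintype m]

lemma exists_pos_sum_mul_exp_lt_one {w g : m → ℝ} (hw : ∑ i, w i = 1) {a : ℝ}
    (ha : ∑ i, w i * g i < a) : ∃ θ > 0, ∑ i, w i * Real.exp (θ * (g i - a)) < 1 := by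
  -- As a function of `θ` the sum equals `1` at `0` and has negative derivative there.
  have hderiv : HasDerivAt (fun θ : ℝ => ∑ i, w i * Real.exp (θ * (g i - a)))
      (∑ i, w i * (g i - a)) 0 := by
    refine HasDerivAt.fun_sum fun i _ => ?_
    simpa using (((hasDerivAt_id (0 : ℝ)).mul_const (g i - a)).exp).const_mul (w i)
  have hslope : ∑ i, w i * (g i - a) < 0 := by
    simpa [mul_sub, Finset.sum_sub_distrib, ← Finset.sum_mul, hw] using ha
  have hneg : ∀ᶠ θ in 𝓝[>] (0 : ℝ),
      slope (fun θ : ℝ => ∑ i, w i * Real.exp (θ * (g i - a))) 0 θ < 0 :=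
    (hderiv.tendsto_slope.mono_left (nhdsWithin_mono _ fun θ hθ => ne_of_gt hθ)).eventually_lt_const
      hslope
  obtain ⟨θ, hθneg, hθ⟩ := (hneg.and self_mem_nhdsWithin).exists
  refine ⟨θ, hθ, ?_⟩
  rw [slope_def_field, sub_zero, div_lt_iff₀ hθ] at hθneg
  simpa [hw] using hθneg

lemma sum_prod_filter_mul_le_sum_le_pow {w : m → ℝ} (hw : 0 ≤ w) (g : m → ℝ) {a θ : ℝ}
    (hθ : 0 ≤ θ) (n : ℕ) :
    ∑ j : Fin n → m with n * a ≤ ∑ k, g (j k), ∏ k, w (j k) ≤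
      (∑ i, w i * Real.exp (θ * (g i - a))) ^ n := by
  rw [Fintype.sum_pow, Finset.sum_filter]
  refine Finset.sum_le_sum fun j _ => ?_
  have hprod : 0 ≤ ∏ k, w (j k) := Finset.prod_nonneg fun k _ => hw _
  rw [Finset.prod_mul_distrib, ← Real.exp_sum, ← Finset.mul_sum]
  split_ifs with h
  · refine le_mul_of_one_le_right hprod (Real.one_le_exp (mul_nonneg hθ ?_))
    simpa [Finset.sum_sub_distrib] using h
  · positivity

lemma tendsto_sum_prod_filter_mul_le_sum {w g : m → ℝ} (hw₀ : 0 ≤ w) (hw₁ : ∑ i, w i = 1) {a : ℝ}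
    (ha : ∑ i, w i * g i < a) :
    Tendsto (fun n : ℕ => ∑ j : Fin n → m with n * a ≤ ∑ k, g (j k), ∏ k, w (j k)) atTop
      (𝓝 0) := by
  obtain ⟨θ, hθ, hlt⟩ := exists_pos_sum_mul_exp_lt_one hw₁ ha
  refine squeeze_zero
    (fun n => Finset.sum_nonneg fun j _ => Finset.prod_nonneg fun k _ => hw₀ _)
    (fun n => sum_prod_filter_mul_le_sum_le_pow hw₀ g hθ.le n)
    (tendsto_pow_atTop_nhds_zero_of_lt_one ?_ hlt)
  exact Finset.sum_nonneg fun i _ => mul_nonneg (hw₀ i) (Real.exp_pos _).le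

lemma tendsto_sum_prod_filter_rpow_lt_prod {p : m → ℝ} (hp₀ : 0 ≤ p) (hp₁ : ∑ i, p i = 1) {a : ℝ}
    (ha : ∑ i, p i * Real.logb 2 (p i) < a) :
    Tendsto (fun n : ℕ => ∑ j : Fin n → m with (2 : ℝ) ^ (n * a) < ∏ k, p (j k), ∏ k, p (j k))
      atTop (𝓝 0) := by
  refine squeeze_zero
    (fun n => Finset.sum_nonneg fun j _ => Finset.prod_nonneg fun k _ => hp₀ _) (fun n => ?_)
    (tendsto_sum_prod_filter_mul_le_sum hp₀ hp₁ ha)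
  refine Finset.sum_le_sum_of_subset_of_nonneg (fun j hj => ?_)
    fun j _ _ => Finset.prod_nonneg fun k _ => hp₀ _
  rw [Finset.mem_filter_univ] at hj ⊢
  have hpos : 0 < ∏ k, p (j k) := (Real.rpow_pos_of_pos two_pos _).trans hj
  rw [← Real.logb_prod _ _ fun k _ => Finset.prod_ne_zero_iff.mp hpos.ne' k (Finset.mem_univ k)]
  exact ((Real.lt_logb_iff_rpow_lt one_lt_two hpos).mpr hj).le

lemma tendsto_sum_prod_filter_prod_lt_rpow {w q : m → ℝ} (hw₀ : 0 ≤ w) (hw₁ : ∑ i, w i = 1)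
    (hq : 0 ≤ q) (hwq : ∀ i, q i = 0 → w i = 0) {b : ℝ}
    (hb : b < ∑ i, w i * Real.logb 2 (q i)) :
    Tendsto (fun n : ℕ => ∑ j : Fin n → m with ∏ k, q (j k) < (2 : ℝ) ^ (n * b), ∏ k, w (j k))
      atTop (𝓝 0) := by
  have hneg : ∑ i, w i * -Real.logb 2 (q i) < -b := by simpa using hb
  refine squeeze_zero
    (fun n => Finset.sum_nonneg fun j _ => Finset.prod_nonneg fun k _ => hw₀ _) (fun n => ?_)
    (tendsto_sum_prod_filter_mul_le_sum hw₀ hw₁ hneg)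
  rw [← Finset.sum_filter_ne_zero]
  refine Finset.sum_le_sum_of_subset_of_nonneg (fun j hj => ?_)
    fun j _ _ => Finset.prod_nonneg fun k _ => hw₀ _
  simp only [Finset.mem_filter, Finset.mem_univ, true_and] at hj ⊢
  obtain ⟨hj, hne⟩ := hj
  have hq_ne : ∀ k ∈ Finset.univ, q (j k) ≠ 0 := fun k hk h₀ =>
    Finset.prod_ne_zero_iff.mp hne k hk (hwq _ h₀)
  have hpos : 0 < ∏ k, q (j k) := Finset.prod_pos fun k hk => (hq _).lt_of_ne' (hq_ne k hk)
  rw [Finset.sum_neg_distrib, ← Real.logb_prod _ _ hq_ne, mul_neg, neg_le_neg_iff]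
  exact ((Real.logb_lt_iff_lt_rpow one_lt_two hpos).mpr hj).le

end LargeDeviations

section SteinStrongConverse

open Matrix
open scoped MatrixOrder

variable {m : Type*} [Fintype m] [DecidableEq m]

theorem eventually_le_re_trace_mul_tensorFam_conjDiagonal {U V : unitaryGroup m ℂ} {p q : m → ℝ}
    (hp₀ : 0 ≤ p) (hp₁ : ∑ i, p i = 1) (hq : 0 ≤ q)
    (hpq : ∀ i, q i = 0 → measurementProb V (conjDiagonal U p) i = 0) {a b : ℝ}
    (ha : ∑ i, p i * Real.logb 2 (p i) < a)
    (hb : b < ∑ i, measurementProb V (conjDiagonal U p) i * Real.logb 2 (q i))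
    {ε : ℝ} (hε : ε < 1) :
    ∀ᶠ n : ℕ in atTop, ∀ T : Matrix (Fin n → m) (Fin n → m) ℂ, 0 ≤ T → T ≤ 1 →
      (trace ((1 - T) * tensorFam fun _ => conjDiagonal U p)).re ≤ ε →
        (2 : ℝ) ^ (n * (b - a)) * ((1 - ε) / 4) ≤
          (trace (T * tensorFam fun _ => conjDiagonal V q)).re := by
  have hρ : (conjDiagonal U p).PosSemidef :=
    nonneg_iff_posSemidef.mp (map_nonneg (conjDiagonal U) hp₀)
  have hw₁ : ∑ i, measurementProb V (conjDiagonal U p) i = 1 := by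
    rw [sum_measurementProb, re_trace_conjDiagonal, hp₁]
  have hη : 0 < (1 - ε) / 6 := by linarith
  filter_upwards
    [(tendsto_sum_prod_filter_rpow_lt_prod hp₀ hp₁ ha).eventually_le_const hη,
      (tendsto_sum_prod_filter_prod_lt_rpow (measurementProb_nonneg V hρ) hw₁ hq hpq
        hb).eventually_le_const hη] with n htailA htailB T hT₀ hT₁ hTε
  have hr : 0 < (2 : ℝ) ^ (n * b) := by positivity
  have ht : 0 < (2 : ℝ) ^ (n * a) := by positivity
  have hpower : 1 - ε ≤ (trace (T * tensorFam fun _ : Fin n => conjDiagonal U p)).re := by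
    have htrace : (trace (tensorFam fun _ : Fin n => conjDiagonal U p)).re = 1 := by
      simp only [tensorFam_conjDiagonal, re_trace_conjDiagonal, ← Fintype.sum_pow, hp₁, one_pow]
    rw [sub_mul, one_mul, trace_sub, Complex.sub_re, htrace] at hTε
    linarith
  have honeShot := mul_re_trace_mul_conjDiagonal_le (U := tensorUnitary fun _ : Fin n => U)
    (V := tensorUnitary fun _ => V) hT₀ hT₁ (a := fun j => ∏ k, p (j k))
    (b := fun j => ∏ k, q (j k)) (fun j => Finset.prod_nonneg fun k _ => hp₀ _)
    (fun j => Finset.prod_nonneg fun k _ => hq _) ht.le hr.le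
  simp only [← tensorFam_conjDiagonal, measurementProb_tensorFam _ fun _ => hρ.1] at honeShot
  rw [mul_sub, Real.rpow_sub two_pos, div_mul_eq_mul_div, div_le_iff₀ ht]
  have hlower := mul_le_mul_of_nonneg_left hpower hr.le
  have htails := mul_le_mul_of_nonneg_left
    (add_le_add htailA (mul_le_mul_of_nonneg_left htailB zero_le_two)) hr.le
  linarith

lemma conjDiagonal_eigenvalues {A : Matrix m m ℂ} (hA : A.IsHermitian) :
    conjDiagonal hA.eigenvectorUnitary hA.eigenvalues = A :=
  hA.spectral_theorem.symm

lemma measurementProb_eigenvectorUnitary {A : Matrix m m ℂ} (hA : A.IsHermitian) :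
    measurementProb hA.eigenvectorUnitary A = hA.eigenvalues := by
  have hdiag := measurementProb_conjDiagonal hA.eigenvectorUnitary hA.eigenvalues
  rwa [conjDiagonal_eigenvalues hA] at hdiag

lemma mlog2_eq_conjDiagonal {A : Matrix m m ℂ} (hA : A.PosSemidef) :
    mlog2 A = conjDiagonal hA.1.eigenvectorUnitary fun i => Real.logb 2 (hA.1.eigenvalues i) := by
  have hlog : ∀ i, (if hA.1.eigenvalues i ≤ 0 then 0 else Real.logb 2 (hA.1.eigenvalues i)) =
      Real.logb 2 (hA.1.eigenvalues i) := fun i => by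
    split_ifs with hi
    · rw [le_antisymm hi (hA.eigenvalues_nonneg i), Real.logb_zero]
    · rfl
  simp only [mlog2, matFun, dif_pos hA.1, hlog, conjDiagonal_apply]

lemma relEnt_eq_sub {ρ σ : Matrix m m ℂ} (hρ : ρ.PosSemidef) (hσ : σ.PosSemidef) :
    relEnt ρ σ = ∑ i, hρ.1.eigenvalues i * Real.logb 2 (hρ.1.eigenvalues i) -
      ∑ i, measurementProb hσ.1.eigenvectorUnitary ρ i * Real.logb 2 (hσ.1.eigenvalues i) := by
  rw [relEnt, mul_sub, trace_sub, Complex.sub_re, trace_mul_comm, trace_mul_comm ρ,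
    mlog2_eq_conjDiagonal hρ, mlog2_eq_conjDiagonal hσ, re_trace_conjDiagonal_mul,
    re_trace_conjDiagonal_mul, measurementProb_eigenvectorUnitary hρ.1]
  simp only [mul_comm]

theorem stein_strong_converse {ρ σ : Matrix m m ℂ} (hρ : IsDensity ρ) (hσ : σ.PosSemidef)
    (hker : ∀ v, σ *ᵥ v = 0 → ρ *ᵥ v = 0) {ε δ : ℝ} (hε : ε < 1) (hδ : 0 < δ) :
    ∀ᶠ n : ℕ in atTop, ∀ T : Matrix (Fin n → m) (Fin n → m) ℂ, 0 ≤ T → T ≤ 1 →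
      (trace ((1 - T) * tensorFam fun _ => ρ)).re ≤ ε →
        (2 : ℝ) ^ (-n * (relEnt ρ σ + δ)) * ((1 - ε) / 4) ≤
          (trace (T * tensorFam fun _ => σ)).re := by
  have hρU := conjDiagonal_eigenvalues hρ.1.1
  have hσV := conjDiagonal_eigenvalues hσ.1
  have hp₁ : ∑ i, hρ.1.1.eigenvalues i = 1 := by
    rw [← re_trace_conjDiagonal hρ.1.1.eigenvectorUnitary, hρU, hρ.2, Complex.one_re]
  have hconverse := eventually_le_re_trace_mul_tensorFam_conjDiagonal
    (U := hρ.1.1.eigenvectorUnitary) (V := hσ.1.eigenvectorUnitary)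
    hρ.1.eigenvalues_nonneg hp₁ hσ.eigenvalues_nonneg
    (fun i => measurementProb_eq_zero_of_ker_le (by rwa [hρU, hσV]))
    (lt_add_of_pos_right _ (half_pos hδ)) (sub_lt_self _ (half_pos hδ)) hε
  rw [hρU, hσV] at hconverse
  convert hconverse using 9
  rw [relEnt_eq_sub hρ.1 hσ]
  ring

end SteinStrongConverse

section DensityMatrices

open Matrix
open scoped MatrixOrder

variable {m : Type*} [Fintype m]

lemma IsDensity.sum_smul {ι : Type*} {s : Finset ι} {w : ι → ℝ} (hw₀ : ∀ i, 0 ≤ w i)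
    (hw₁ : ∑ i ∈ s, w i = 1) {ρ : ι → Matrix m m ℂ} (hρ : ∀ i, IsDensity (ρ i)) :
    IsDensity (∑ i ∈ s, w i • ρ i) := by
  refine ⟨posSemidef_sum s fun i _ => (hρ i).1.smul (hw₀ i), ?_⟩
  simp only [trace_sum, trace_smul, (hρ _).2, ← Finset.sum_smul, hw₁, one_smul]

lemma mulVec_eq_zero_of_le {A B : Matrix m m ℂ} (hA : 0 ≤ A) (hAB : A ≤ B) {v : m → ℂ}
    (hv : B *ᵥ v = 0) : A *ᵥ v = 0 := by
  rw [nonneg_iff_posSemidef] at hA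
  refine (hA.dotProduct_mulVec_zero_iff v).mp (le_antisymm ?_ (hA.dotProduct_mulVec_nonneg v))
  simpa [sub_mulVec, hv] using (le_iff.mp hAB).dotProduct_mulVec_nonneg v

end DensityMatrices

section ClassicalQuantum

open Matrix
open scoped MatrixOrder

variable {X B : Type*} [DecidableEq X]

lemma cqState_sum_smul {ι : Type*} (w : X → ℝ) (s : Finset ι) (c : ι → ℝ)
    (ρ : X → ι → Matrix B B ℂ) :
    cqState w (fun x => ∑ i ∈ s, c i • ρ x i) = ∑ i ∈ s, c i • cqState w fun x => ρ x i := by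
  ext p q
  simp only [cqState, of_apply, Matrix.sum_apply, Matrix.smul_apply, Finset.mul_sum, mul_smul_comm]

lemma cqState_prod_submatrix_arrowProd {k : Type*} [Fintype k] (P : X → ℝ)
    (τ : X → Matrix B B ℂ) :
    (cqState (fun xv : k → X => ∏ a, P (xv a)) fun xv => tensorFam fun a => τ (xv a)).submatrix
        (Equiv.arrowProdEquivProdArrow k (fun _ => X) fun _ => B)
        (Equiv.arrowProdEquivProdArrow k (fun _ => X) fun _ => B) =
      tensorFam fun _ : k => cqState P τ := by
  ext i j
  simp only [submatrix_apply, cqState, tensorFam, of_apply, Equiv.arrowProdEquivProdArrow,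
    Equiv.coe_fn_mk, Finset.prod_mul_distrib, Fintype.prod_ite_zero, funext_iff,
    Complex.ofReal_prod]

lemma cqState_mulVec_apply [Fintype X] [Fintype B] (w : X → ℝ) (ρ : X → Matrix B B ℂ)
    (v : X × B → ℂ) (x : X) (b : B) :
    (cqState w ρ *ᵥ v) (x, b) = w x * (ρ x *ᵥ fun c => v (x, c)) b := by
  simp [mulVec, dotProduct, cqState, Fintype.sum_prod_type, ite_mul, Finset.mul_sum, mul_assoc]

lemma posSemidef_cqState [Finite X] [Finite B] {w : X → ℝ} (hw : 0 ≤ w) {ρ : X → Matrix B B ℂ}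
    (hρ : ∀ x, (ρ x).PosSemidef) : (cqState w ρ).PosSemidef := by
  cases nonempty_fintype X
  cases nonempty_fintype B
  refine PosSemidef.of_dotProduct_mulVec_nonneg ?_ fun v => ?_
  · ext ⟨x, b⟩ ⟨y, c⟩
    by_cases hxy : x = y
    · subst hxy
      simp [cqState, (hρ x).1.apply b c]
    · simp [cqState, hxy, Ne.symm hxy]
  · have hquad : star v ⬝ᵥ (cqState w ρ *ᵥ v) =
        ∑ x, (w x : ℂ) * (star (fun b => v (x, b)) ⬝ᵥ (ρ x *ᵥ fun b => v (x, b))) := by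
      simp [dotProduct, cqState_mulVec_apply, Fintype.sum_prod_type, Finset.mul_sum,
        mul_left_comm]
    rw [hquad]
    exact Finset.sum_nonneg fun x _ =>
      mul_nonneg (Complex.zero_le_real.mpr (hw x)) ((hρ x).dotProduct_mulVec_nonneg _)

variable [Fintype X] [Fintype B]

lemma trace_cqState (w : X → ℝ) (ρ : X → Matrix B B ℂ) :
    trace (cqState w ρ) = ∑ x, w x * trace (ρ x) := by
  simp [trace, cqState, Fintype.sum_prod_type, Finset.mul_sum]

lemma IsDensity.cqState {w : X → ℝ} (hw₀ : 0 ≤ w) (hw₁ : ∑ x, w x = 1) {ρ : X → Matrix B B ℂ}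
    (hρ : ∀ x, IsDensity (ρ x)) : IsDensity (cqState w ρ) := by
  refine ⟨posSemidef_cqState hw₀ fun x => (hρ x).1, ?_⟩
  simp only [trace_cqState, (hρ _).2, mul_one]
  exact_mod_cast hw₁

lemma cqState_mulVec_eq_zero_of_average {P : X → ℝ} (hP : 0 ≤ P)
    {τ : X → Matrix B B ℂ} (hτ : ∀ x, (τ x).PosSemidef) {v : X × B → ℂ}
    (hv : cqState P (fun _ => ∑ x, P x • τ x) *ᵥ v = 0) : cqState P τ *ᵥ v = 0 := by
  ext ⟨x, b⟩
  by_cases hx : P x = 0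
  · simp [cqState_mulVec_apply, hx]
  have hsummand : ∀ y, 0 ≤ P y • τ y := fun y => ((hτ y).smul (hP y)).nonneg
  have haverage : (∑ y, P y • τ y) *ᵥ (fun c => v (x, c)) = 0 := by
    ext c
    simpa [cqState_mulVec_apply, hx] using congrFun hv (x, c)
  have hle : P x • τ x ≤ ∑ y, P y • τ y :=
    Finset.single_le_sum (fun y _ => hsummand y) (Finset.mem_univ x)
  have hblock := congrFun (mulVec_eq_zero_of_le (hsummand x) hle haverage) b
  simpa [cqState_mulVec_apply, smul_mulVec] using hblock

lemma trace_submatrix_mul_submatrix {m n R : Type*} [Fintype m] [Fintype n]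
    [NonUnitalNonAssocSemiring R] (e : m ≃ n) (A C : Matrix n n R) :
    trace (A.submatrix e e * C.submatrix e e) = trace (A * C) := by
  rw [submatrix_mul_equiv]
  exact Equiv.sum_comp e fun i => (A * C) i i

end ClassicalQuantum

section IndependenceTesting

open Matrix
open scoped MatrixOrder

variable {X B : Type*} [Fintype X] [DecidableEq X] [Fintype B]

theorem cq_stein_strong_converse [DecidableEq B] {P : X → ℝ} (hP₀ : 0 ≤ P) (hP₁ : ∑ x, P x = 1)
    {τ : X → Matrix B B ℂ} (hτ : ∀ x, IsDensity (τ x)) {ε δ : ℝ} (hε : ε < 1) (hδ : 0 < δ) :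
    ∀ᶠ n : ℕ in atTop,
      ∀ T : Matrix ((Fin n → X) × (Fin n → B)) ((Fin n → X) × (Fin n → B)) ℂ, 0 ≤ T → T ≤ 1 →
        (trace ((1 - T) * cqState (fun xv : Fin n → X => ∏ k, P (xv k))
          fun xv : Fin n → X => tensorFam fun k => τ (xv k))).re ≤ ε →
        (2 : ℝ) ^ (-n * (relEnt (cqState P τ) (cqState P fun _ => ∑ x, P x • τ x) + δ)) *
            ((1 - ε) / 4) ≤
          (trace (T * cqState (fun xv : Fin n → X => ∏ k, P (xv k))
            fun _ => tensorFam fun _ => ∑ x, P x • τ x)).re := by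
  have hσ : IsDensity (cqState P fun _ => ∑ x, P x • τ x) :=
    .cqState hP₀ hP₁ fun _ => .sum_smul hP₀ hP₁ hτ
  filter_upwards [stein_strong_converse (.cqState hP₀ hP₁ hτ) hσ.1
    (fun v => cqState_mulVec_eq_zero_of_average hP₀ fun x => (hτ x).1) hε hδ]
    with n hn T hT₀ hT₁ hTε
  let e := Equiv.arrowProdEquivProdArrow (Fin n) (fun _ => X) fun _ => B
  have hsub : 1 - T.submatrix e e = (1 - T).submatrix e e := by
    rw [← submatrix_one_equiv e, submatrix_sub]
    rfl
  have htypeII := hn (T.submatrix e e)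
    ((nonneg_iff_posSemidef.mp hT₀).submatrix e).nonneg
    (le_iff.mpr (hsub ▸ (le_iff.mp hT₁).submatrix e))
    (by rwa [← cqState_prod_submatrix_arrowProd, hsub, trace_submatrix_mul_submatrix])
  rwa [← cqState_prod_submatrix_arrowProd, trace_submatrix_mul_submatrix] at htypeII

lemma re_trace_mul_cqState_tensorFam_average_le {k S : Type*} [Fintype k] [DecidableEq k]
    {s : Finset S} {Q : S → ℝ} (hQ₀ : ∀ i, 0 ≤ Q i) (hQ₁ : ∑ i ∈ s, Q i = 1)
    {A : Matrix ((k → X) × (k → B)) ((k → X) × (k → B)) ℂ} {w : (k → X) → ℝ}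
    {ρ : X → S → Matrix B B ℂ} {ε : ℝ}
    (hε : ∀ sv : k → S,
      (trace (A * cqState w fun xv => tensorFam fun a => ρ (xv a) (sv a))).re ≤ ε) :
    (trace (A * cqState w fun xv => tensorFam fun a => ∑ i ∈ s, Q i • ρ (xv a) i)).re ≤ ε := by
  have hweights : ∑ sv ∈ Fintype.piFinset fun _ : k => s, ∏ a, Q (sv a) = 1 := by
    rw [← Finset.prod_univ_sum, hQ₁, Finset.prod_const_one]
  simp only [tensorFam_sum_smul, cqState_sum_smul, Finset.mul_sum, mul_smul_comm, trace_sum,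
    trace_smul, Complex.re_sum, Complex.smul_re, smul_eq_mul]
  calc _ ≤ ∑ sv ∈ Fintype.piFinset fun _ : k => s, (∏ a, Q (sv a)) * ε :=
        Finset.sum_le_sum fun sv _ =>
          mul_le_mul_of_nonneg_left (hε sv) (Finset.prod_nonneg fun a _ => hQ₀ _)
    _ = ε := by rw [← Finset.sum_mul, hweights, one_mul]

/-- The worst-case type-II error of the test `T`: the largest probability of accepting a product
state `Σ_x w(x) |x⟩⟨x| ⊗ σ`. -/
def typeIIError (w : X → ℝ) (T : Matrix (X × B) (X × B) ℂ) : ℝ :=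
  ⨆ σ : {σ : Matrix B B ℂ // IsDensity σ}, (trace (T * cqState w fun _ => σ.1)).re

variable {w : X → ℝ} {T : Matrix (X × B) (X × B) ℂ}

lemma typeIIError_nonneg (hw : 0 ≤ w) (hT : 0 ≤ T) : 0 ≤ typeIIError w T :=
  Real.iSup_nonneg fun σ => re_trace_mul_nonneg hT (posSemidef_cqState hw fun _ => σ.2.1).nonneg

variable [DecidableEq B]

lemma re_trace_mul_cqState_le_one (hw₀ : 0 ≤ w) (hw₁ : ∑ x, w x = 1) (hT : T ≤ 1)
    {σ : Matrix B B ℂ} (hσ : IsDensity σ) : (trace (T * cqState w fun _ => σ)).re ≤ 1 := by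
  have hcq : IsDensity (cqState w fun _ => σ) := .cqState hw₀ hw₁ fun _ => hσ
  simpa [hcq.2] using re_trace_mul_le_re_trace hT hcq.1.nonneg

lemma typeIIError_le_one (hw₀ : 0 ≤ w) (hw₁ : ∑ x, w x = 1) (hT : T ≤ 1) :
    typeIIError w T ≤ 1 :=
  Real.iSup_le (fun σ => re_trace_mul_cqState_le_one hw₀ hw₁ hT σ.2) zero_le_one

lemma le_typeIIError (hw₀ : 0 ≤ w) (hw₁ : ∑ x, w x = 1) (hT : T ≤ 1)
    {σ : Matrix B B ℂ} (hσ : IsDensity σ) :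
    (trace (T * cqState w fun _ => σ)).re ≤ typeIIError w T :=
  le_ciSup (f := fun σ : {σ : Matrix B B ℂ // IsDensity σ} =>
      (trace (T * cqState w fun _ => σ.1)).re)
    ⟨1, Set.forall_mem_range.mpr fun σ => re_trace_mul_cqState_le_one hw₀ hw₁ hT σ.2⟩ ⟨σ, hσ⟩

end IndependenceTesting

section UniversalTest

open Matrix
open scoped MatrixOrder

variable {𝒳 𝒮 : Type*} [Fintype 𝒳] [DecidableEq 𝒳] {d : ℕ}
  {ρ : 𝒳 → 𝒮 → Matrix (Fin d) (Fin d) ℂ} {P : 𝒳 → ℝ} {ε : ℝ}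

lemma betaN_le_one (hP₀ : 0 ≤ P) (hP₁ : ∑ x, P x = 1) (hε : 0 ≤ ε) (n : ℕ) :
    betaN ρ P ε n ≤ 1 := by
  have hPn₀ : 0 ≤ fun xv : Fin n → 𝒳 => ∏ k, P (xv k) := fun xv =>
    Finset.prod_nonneg fun k _ => hP₀ _
  have hPn₁ : ∑ xv : Fin n → 𝒳, ∏ k, P (xv k) = 1 := by rw [← Fintype.sum_pow, hP₁, one_pow]
  refine csInf_le_of_le ⟨0, ?_⟩
    ⟨1, .one, by simpa using PosSemidef.zero, by simpa using fun _ => hε, rfl⟩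
    (typeIIError_le_one hPn₀ hPn₁ le_rfl)
  rintro v ⟨T, hT, -, -, rfl⟩
  exact typeIIError_nonneg hPn₀ hT.nonneg

theorem eventually_le_betaN (hρ : ∀ x s, IsDensity (ρ x s)) (hP₀ : 0 ≤ P) (hP₁ : ∑ x, P x = 1)
    (hε : ε ∈ Set.Ico 0 1) (Q : FinProb 𝒮) {δ : ℝ} (hδ : 0 < δ) :
    ∀ᶠ n : ℕ in atTop,
      (2 : ℝ) ^ (-n * (mutInfI ρ P Q.1 + δ)) * ((1 - ε) / 4) ≤ betaN ρ P ε n := by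
  obtain ⟨Q, hQ₀, hQ₁⟩ := Q
  have hτ : ∀ x, IsDensity (Q.sum fun s w => w • ρ x s) := fun x => .sum_smul hQ₀ hQ₁ (hρ x)
  filter_upwards [cq_stein_strong_converse hP₀ hP₁ hτ hε.2 hδ] with n hn
  refine le_csInf ⟨_, 1, .one, by simpa using PosSemidef.zero, by simpa using fun _ => hε.1, rfl⟩ ?_
  rintro v ⟨T, hT₀, hT₁, hTε, rfl⟩
  refine (hn T hT₀.nonneg (le_iff.mpr hT₁)
    (re_trace_mul_cqState_tensorFam_average_le hQ₀ hQ₁ hTε)).trans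
    (le_typeIIError (fun xv => Finset.prod_nonneg fun k _ => hP₀ _)
      (by rw [← Fintype.sum_pow, hP₁, one_pow]) (le_iff.mpr hT₁)
      (.tensorFam fun _ => .sum_smul hP₀ hP₁ hτ))

end UniversalTest

section Exponents

open scoped Topology

lemma limsup_neg_logb_div_le {β : ℕ → ℝ} {c D : ℝ} (hβ : ∀ n, β n ≤ 1) (hc : 0 < c)
    (hlower : ∀ δ > 0, ∀ᶠ n : ℕ in atTop, (2 : ℝ) ^ (-n * (D + δ)) * c ≤ β n) :
    limsup (fun n : ℕ => -(1 / (n : ℝ)) * Real.logb 2 (β n)) atTop ≤ D := by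
  have hβ₀ : ∀ᶠ n in atTop, 0 < β n := by
    filter_upwards [hlower 1 one_pos] with n hn
    exact (by positivity : (0 : ℝ) < 2 ^ (-n * (D + 1)) * c).trans_le hn
  have hcobdd : IsCoboundedUnder (· ≤ ·) atTop
      fun n : ℕ => -(1 / (n : ℝ)) * Real.logb 2 (β n) := by
    refine IsBoundedUnder.isCoboundedUnder_le ⟨0, eventually_map.mpr ?_⟩
    filter_upwards [hβ₀] with n hn
    exact mul_nonneg_of_nonpos_of_nonpos (neg_nonpos.mpr (by positivity))
      (Real.logb_nonpos one_lt_two hn.le (hβ n))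
  refine le_of_forall_pos_le_add fun δ hδ => limsup_le_of_le hcobdd ?_
  have hconst : Tendsto (fun n : ℕ => -Real.logb 2 c / n) atTop (𝓝 0) :=
    tendsto_const_div_atTop_nhds_zero_nat _
  filter_upwards [hlower (δ / 2) (half_pos hδ), eventually_gt_atTop 0,
    hconst.eventually_le_const (half_pos hδ)] with n hn hn₀ hcn
  have hpow : (0 : ℝ) < 2 ^ (-n * (D + δ / 2)) := by positivity
  have hlog : -n * (D + δ / 2) + Real.logb 2 c ≤ Real.logb 2 (β n) := by
    have hmono := Real.logb_le_logb_of_le one_lt_two (mul_pos hpow hc) hn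
    rwa [Real.logb_mul hpow.ne' hc.ne', Real.logb_rpow two_pos one_lt_two.ne'] at hmono
  calc -(1 / (n : ℝ)) * Real.logb 2 (β n)
      ≤ -(1 / (n : ℝ)) * (-n * (D + δ / 2) + Real.logb 2 c) :=
        mul_le_mul_of_nonpos_left hlog (neg_nonpos.mpr (by positivity))
    _ = D + δ / 2 + -Real.logb 2 c / n := by field_simp; ring
    _ ≤ D + δ := by linarith

end Exponents

lemma nonempty_finProb {𝒮 : Type*} [Nonempty 𝒮] : Nonempty (FinProb 𝒮) :=
  have ⟨s⟩ := ‹Nonempty 𝒮›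
  ⟨Finsupp.single s 1, Finsupp.single_nonneg.mpr zero_le_one, by simp⟩

/-- strong converse direction. For every nonempty `𝒮`, every probability
distribution `P` on `𝒳`, and every `ε ∈ (0,1)`,
`limsup_{n→∞} −(1/n) log₂ β_n(ε) ≤ inf_Q I[X;B]_{P,Q}`, the infimum over finitely supported
probability distributions `Q` on `𝒮`. -/
theorem statement2 {𝒳 𝒮 : Type*} [Fintype 𝒳] [DecidableEq 𝒳] [Nonempty 𝒮] {d : ℕ}
    (ρ : 𝒳 → 𝒮 → Matrix (Fin d) (Fin d) ℂ)
    (hρ : ∀ x s, IsDensity (ρ x s))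
    (P : 𝒳 → ℝ) (hP0 : ∀ x, 0 ≤ P x) (hP1 : ∑ x, P x = 1)
    (ε : ℝ) (hε : ε ∈ Set.Ioo (0 : ℝ) 1) :
    Filter.limsup (fun n : ℕ => -(1 / (n : ℝ)) * Real.logb 2 (betaN ρ P ε n)) atTop ≤
      ⨅ Q : FinProb 𝒮, mutInfI ρ P Q.1 := by
  have : Nonempty (FinProb 𝒮) := nonempty_finProb
  refine le_ciInf fun Q => limsup_neg_logb_div_le (fun n => betaN_le_one hP0 hP1 hε.1.le n)
    (c := (1 - ε) / 4) (div_pos (sub_pos.mpr hε.2) four_pos) fun δ hδ => ?_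
  exact eventually_le_betaN hρ hP0 hP1 ⟨hε.1.le, hε.2⟩ Q hδ
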